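/- (Erdős–Turán–Koksma inequality.) For every integer s ≥ 1 there exists a constant C_s depending only on s such that for any integer H > 1 and any sequence Γ = (γ_{n,1},…,γ_{n,s}), n = 0,…,N−1, of N points in [0,1)^s, the discrepancy Δ(Γ) satisfies Δ(Γ) ≤ C_s·(1/H + (1/N)·Σ_{0 < |h| ≤ H} ∏_{j=1}^{s} (|h_j| + 1)^{−1} · |Σ_{n=0}^{N−1} exp(2πi Σ_{j=1}^{s} h_j γ_{n,j})|), where the outer sum is over all integer vectors h = (h_1,…,h_s) ∈ ℤ^s with 0 < max_{1≤j≤s} |h_j| ≤ H. -/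

import Mathlib

open MvPolynomial

/-- Membership of a polynomial system `F = (F_0, …, F_m)` over `R` in the class `𝔉(S,m)`,
where `s i j` records the entries of the upper triangular matrix `S` (for `i < j`). -/
def IsFSystem {R : Type*} [CommRing R] (m : ℕ) (s : ℕ → ℕ → ℕ)
    (F : Fin (m + 1) → MvPolynomial (Fin (m + 1)) R) : Prop :=
  (∃ g h : R, g ≠ 0 ∧
      F (Fin.last m) = MvPolynomial.C g * MvPolynomial.X (Fin.last m) + MvPolynomial.C h) ∧
  ∀ i : Fin (m + 1), (i : ℕ) < m →
    ∃ (G H Gt : MvPolynomial (Fin (m + 1)) R) (g : R),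
      g ≠ 0 ∧
      F i = MvPolynomial.X i * G + H ∧
      (∀ d ∈ G.support, ∀ j : Fin (m + 1), j ≤ i → d j = 0) ∧
      (∀ d ∈ H.support, ∀ j : Fin (m + 1), j ≤ i → d j = 0) ∧
      G = MvPolynomial.C g *
          (∏ j ∈ Finset.univ.filter (fun j : Fin (m + 1) => i < j),
            MvPolynomial.X j ^ s i.val j.val) + Gt ∧
      (∀ d ∈ Gt.support, ∀ j : Fin (m + 1), i < j → d j < s i.val j.val) ∧
      (∀ d ∈ H.support, ∀ j : Fin (m + 1), i < j → d j ≤ s i.val j.val)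

/-- The iterated polynomials `F_i^{(k)}` of a sequence of polynomial systems:
`F_i^{(0)} = X_i` and `F_i^{(k)} = F_{k,i}(F_0^{(k-1)}, …, F_m^{(k-1)})`. -/
noncomputable def iterSys {R : Type*} [CommRing R] (m : ℕ)
    (Fs : ℕ → Fin (m + 1) → MvPolynomial (Fin (m + 1)) R) :
    ℕ → Fin (m + 1) → MvPolynomial (Fin (m + 1)) R
  | 0 => fun i => MvPolynomial.X i
  | k + 1 => fun i => MvPolynomial.bind₁ (iterSys m Fs k) (Fs (k + 1) i)

/-- The additive character `e_p(z) = exp(2πiz/p)` evaluated at an element of `F_p`. -/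
noncomputable def eP (p : ℕ) (x : ZMod p) : ℂ :=
  Complex.exp (2 * Real.pi * Complex.I * (x.val : ℂ) / (p : ℂ))

/-- `e_M(z) = exp(2πiz/M)` for a natural number `z`. -/
noncomputable def eM (M z : ℕ) : ℂ :=
  Complex.exp (2 * Real.pi * Complex.I * (z : ℂ) / (M : ℂ))

/-- The discrepancy of the first `N` points of a sequence in `[0,1)^s`: the supremum over
boxes `B = [a_1,b_1) × ⋯ × [a_s,b_s) ⊆ [0,1)^s` of `|T(B)/N - vol B|`. -/
noncomputable def discrepancy (s N : ℕ) (P : ℕ → Fin s → ℝ) : ℝ :=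
  sSup {D : ℝ | ∃ a b : Fin s → ℝ,
    (∀ j, 0 ≤ a j ∧ a j ≤ b j ∧ b j ≤ 1) ∧
    D = |(((Finset.range N).filter fun n => ∀ j, a j ≤ P n j ∧ P n j < b j).card : ℝ) / N -
        ∏ j, (b j - a j)|}


noncomputable def ee (x : ℝ) : ℂ := Complex.exp (2 * Real.pi * Complex.I * (x : ℂ))

lemma ee_add (x y : ℝ) : ee (x + y) = ee x * ee y := by
  unfold ee; rw [← Complex.exp_add]; push_cast; ring_nf

lemma ee_zero : ee 0 = 1 := by simp [ee]

lemma ee_eq (x : ℝ) : ee x = Complex.exp (((2 * Real.pi * x : ℝ) : ℂ) * Complex.I) := by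
  unfold ee; push_cast; ring_nf

lemma norm_ee (x : ℝ) : ‖ee x‖ = 1 := by
  rw [ee_eq]; exact Complex.norm_exp_ofReal_mul_I _

lemma ee_conj (x : ℝ) : (starRingEnd ℂ) (ee x) = ee (-x) := by
  unfold ee; rw [← Complex.exp_conj]; simp [Complex.conj_ofNat]

lemma ee_int (n : ℤ) : ee (n : ℝ) = 1 := by
  unfold ee
  have := Complex.exp_int_mul_two_pi_mul_I n
  rw [← this]; congr 1; push_cast; ring

lemma ee_nat_mul (n : ℕ) (x : ℝ) : ee (n * x) = ee x ^ n := by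
  unfold ee; rw [← Complex.exp_nat_mul]; push_cast; ring_nf

lemma ee_sum {ι : Type*} (s : Finset ι) (f : ι → ℝ) : ee (∑ i ∈ s, f i) = ∏ i ∈ s, ee (f i) := by
  unfold ee; rw [← Complex.exp_sum]; push_cast; rw [Finset.mul_sum]

lemma ee_sub_one_ge (y : ℝ) (hy : |y| ≤ 1 / 2) : 4 * |y| ≤ ‖ee y - 1‖ := by
  have h1 : ‖ee y - 1‖ = 2 * |Real.sin (Real.pi * y)| := by
    rw [ee_eq, mul_comm, Complex.norm_exp_I_mul_ofReal_sub_one]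
    rw [Real.norm_eq_abs, abs_mul]; norm_num
    congr 2; ring
  rw [h1]
  have h2 := Real.mul_abs_le_abs_sin (x := Real.pi * y) (by
    rw [abs_mul, abs_of_pos Real.pi_pos]; nlinarith [Real.pi_pos])
  rw [abs_mul, abs_of_pos Real.pi_pos] at h2
  have : 2 / Real.pi * (Real.pi * |y|) = 2 * |y| := by
    field_simp
  linarith

lemma geom_bound (z : ℂ) (hz : ‖z‖ = 1) (h1 : z ≠ 1) (n : ℕ) :
    ‖∑ m ∈ Finset.range n, z ^ m‖ ≤ 2 / ‖z - 1‖ := by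
  rw [geom_sum_eq h1, norm_div]
  gcongr
  calc ‖z ^ n - 1‖ ≤ ‖z ^ n‖ + ‖(1 : ℂ)‖ := norm_sub_le _ _
    _ = 2 := by rw [norm_pow, hz]; norm_num

lemma ee_ne_one (y : ℝ) (hy : |y| ≤ 1 / 2) (h0 : y ≠ 0) : ee y ≠ 1 := by
  intro h
  have := ee_sub_one_ge y hy
  rw [h] at this
  have h2 := abs_pos.mpr h0
  rw [sub_self, norm_zero] at this
  linarith

lemma geom_ee (y : ℝ) (hy : |y| ≤ 1 / 2) (h0 : y ≠ 0) (n : ℕ) :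
    ‖∑ m ∈ Finset.range n, ee (m * y)‖ ≤ 1 / (2 * |y|) := by
  have h := geom_bound (ee y) (norm_ee y) (ee_ne_one y hy h0) n
  simp_rw [ee_nat_mul]
  refine h.trans ?_
  have hp := abs_pos.mpr h0
  have := ee_sub_one_ge y hy
  rw [div_le_div_iff₀ (by linarith) (by linarith)]
  linarith

noncomputable def DD (L : ℕ) (y : ℝ) : ℂ := ∑ p ∈ Finset.range L, ee (p * y)

lemma DD_bound (L : ℕ) (y : ℝ) (h0 : y ≠ 0) (h1 : |y| < 1) :
    ‖DD L y‖ ^ 4 ≤ 1 / (16 * |y| ^ 4) + 1 / (16 * (1 - |y|) ^ 4) := by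
  have hp := abs_pos.mpr h0
  have hq : 0 < 1 - |y| := by linarith
  by_cases hy : |y| ≤ 1 / 2
  · have h := geom_ee y hy h0 L
    have : ‖DD L y‖ ^ 4 ≤ (1 / (2 * |y|)) ^ 4 := by
      unfold DD; gcongr
    have e : (1 / (2 * |y|)) ^ 4 = 1 / (16 * |y| ^ 4) := by
      field_simp; norm_num
    have : 0 ≤ 1 / (16 * (1 - |y|) ^ 4) := by positivity
    linarith
  · push Not at hy
    obtain ⟨k, hk⟩ : ∃ k : ℤ, |y + k| = 1 - |y| := by
      rcases le_total 0 y with h | h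
      · refine ⟨-1, ?_⟩
        rw [abs_of_nonneg h] at *
        push_cast
        rw [abs_of_nonpos (by linarith)]; ring
      · refine ⟨1, ?_⟩
        rw [abs_of_nonpos h] at *
        push_cast
        rw [abs_of_nonneg (by linarith)]; ring
    have hD : DD L y = DD L (y + k) := by
      unfold DD
      refine Finset.sum_congr rfl fun p _ => ?_
      rw [mul_add, ee_add]
      have : ((p : ℝ) * (k : ℝ)) = (((p : ℤ) * k : ℤ) : ℝ) := by push_cast; ring
      rw [this, ee_int, mul_one]
    have h := geom_ee (y + k) (by linarith) (by rw [← abs_pos]; linarith) L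
    rw [hk] at h
    have : ‖DD L y‖ ^ 4 ≤ (1 / (2 * (1 - |y|))) ^ 4 := by
      rw [hD]; unfold DD; gcongr
    have e : (1 / (2 * (1 - |y|))) ^ 4 = 1 / (16 * (1 - |y|) ^ 4) := by
      field_simp; norm_num
    have : 0 ≤ 1 / (16 * |y| ^ 4) := by positivity
    linarith

lemma DD_lower (L : ℕ) (y : ℝ) (h1 : |y| * L ≤ 1 / 8) : (L : ℝ) / 2 ≤ ‖DD L y‖ := by
  refine le_trans ?_ (Complex.re_le_norm _)
  unfold DD
  rw [Complex.re_sum]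
  have : ∀ p ∈ Finset.range L, (1 / 2 : ℝ) ≤ (ee (p * y)).re := by
    intro p hp
    rw [ee_eq, Complex.exp_ofReal_mul_I_re]
    have hpL : (p : ℝ) ≤ L := by exact_mod_cast (Finset.mem_range.mp hp).le
    have hb : |2 * Real.pi * (p * y)| ≤ 1 := by
      rw [abs_mul, abs_mul, abs_mul, abs_of_pos Real.pi_pos]
      simp only [Nat.abs_cast, Nat.abs_ofNat]
      have : (p : ℝ) * |y| ≤ 1 / 8 := by nlinarith [abs_nonneg y]
      nlinarith [Real.pi_pos, Real.pi_lt_four]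
    have := Real.one_sub_sq_div_two_le_cos (x := 2 * Real.pi * (p * y))
    have := (sq_le_one_iff_abs_le_one _).mpr hb
    linarith
  calc (L : ℝ) / 2 = ∑ p ∈ Finset.range L, (1 / 2 : ℝ) := by simp; ring
    _ ≤ _ := Finset.sum_le_sum this

def quad (L : ℕ) : Finset (ℕ × ℕ × ℕ × ℕ) :=
  Finset.range L ×ˢ Finset.range L ×ˢ Finset.range L ×ˢ Finset.range L

def qd (v : ℕ × ℕ × ℕ × ℕ) : ℤ := (v.1 : ℤ) + v.2.1 - v.2.2.1 - v.2.2.2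

def rr (L : ℕ) (h : ℤ) : ℕ := ((quad L).filter fun v => qd v = h).card

lemma rr_le (L : ℕ) (h : ℤ) : rr L h ≤ L ^ 3 := by
  unfold rr
  have : L ^ 3 = (Finset.range L ×ˢ Finset.range L ×ˢ Finset.range L).card := by
    simp; ring
  rw [this]
  refine Finset.card_le_card_of_injOn (fun v => (v.1, v.2.1, v.2.2.1)) ?_ ?_
  · rintro ⟨a, b, c, d⟩ hv
    simp [quad] at hv ⊢
    tauto
  · rintro ⟨a, b, c, d⟩ hv ⟨a', b', c', d'⟩ hv' he
    rw [Finset.mem_coe, Finset.mem_filter] at hv hv'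
    have h1 := hv.2
    have h2 := hv'.2
    simp only [qd] at h1 h2
    simp only [Prod.mk.injEq] at he ⊢
    omega

lemma DD_expand (L H : ℕ) (hH : 2 * (L - 1) ≤ H) (y : ℝ) :
    ((‖DD L y‖ ^ 4 : ℝ) : ℂ) = ∑ h ∈ Finset.Icc (-(H : ℤ)) H, (rr L h : ℂ) * ee (h * y) := by
  have h1 : ((‖DD L y‖ ^ 4 : ℝ) : ℂ) = ∑ v ∈ quad L, ee ((qd v : ℝ) * y) := by
    have : ((‖DD L y‖ ^ 4 : ℝ) : ℂ)
        = DD L y * (DD L y * ((starRingEnd ℂ) (DD L y) * (starRingEnd ℂ) (DD L y))) := by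
      have := Complex.mul_conj' (DD L y)
      push_cast
      linear_combination (-(‖DD L y‖ : ℂ) ^ 2 - DD L y * (starRingEnd ℂ) (DD L y)) * this
    rw [this]
    unfold quad DD
    rw [map_sum, Finset.sum_product, Finset.sum_mul_sum]
    simp_rw [Finset.sum_product, Finset.sum_mul_sum, Finset.mul_sum]
    refine Finset.sum_congr rfl fun a _ => ?_
    refine Finset.sum_congr rfl fun b _ => ?_
    refine Finset.sum_congr rfl fun c _ => ?_
    refine Finset.sum_congr rfl fun d _ => ?_
    rw [ee_conj, ee_conj, ← ee_add, ← ee_add, ← ee_add]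
    congr 1
    simp [qd]; ring
  rw [h1, ← Finset.sum_fiberwise_of_maps_to (s := quad L) (t := Finset.Icc (-(H : ℤ)) H) (g := qd)]
  · refine Finset.sum_congr rfl fun h _ => ?_
    rw [Finset.sum_congr rfl (g := fun _ => ee (h * y))]
    · simp [rr]
    · intro v hv
      rw [(Finset.mem_filter.mp hv).2]
  · rintro ⟨a, b, c, d⟩ hv
    simp [quad, qd] at hv ⊢
    omega

lemma DD_sum (L H M : ℕ) (hH : 2 * (L - 1) ≤ H) (hM : 2 * H ≤ M) (hM0 : 0 < M) (x : ℝ) :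
    ∑ m ∈ Finset.range M, ‖DD L (x - (m + 1 / 2) / M)‖ ^ 4 = M * rr L 0 := by
  have hMR : (0 : ℝ) < M := by exact_mod_cast hM0
  rw [← Complex.ofReal_inj]
  rw [Complex.ofReal_sum]
  simp_rw [DD_expand L H hH]
  rw [Finset.sum_comm, Finset.sum_eq_single 0]
  · simp [ee_zero]
  · intro h hh hne
    rw [← Finset.mul_sum]
    have e : ∀ m ∈ Finset.range M, ee (h * (x - (m + 1 / 2) / M))
        = ee (h * (x - (1 / 2) / M)) * ee (-(h : ℝ) / M) ^ m := by
      intro m _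
      rw [← ee_nat_mul, ← ee_add]; congr 1; ring
    rw [Finset.sum_congr rfl e, ← Finset.mul_sum]
    have hz : ee (-(h : ℝ) / M) ≠ 1 := by
      apply ee_ne_one
      · rw [abs_div, abs_neg, abs_of_pos hMR, div_le_iff₀ hMR]
        rw [Finset.mem_Icc] at hh
        have : |h| ≤ H := abs_le.mpr hh
        have : |(h : ℝ)| ≤ H := by exact_mod_cast this
        have : (2 : ℝ) * H ≤ M := by exact_mod_cast hM
        linarith
      · have : (h : ℝ) ≠ 0 := by exact_mod_cast hne
        exact div_ne_zero (neg_ne_zero.mpr this) hMR.ne'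
    have hz2 : ee (-(h : ℝ) / M) ^ M = 1 := by
      rw [← ee_nat_mul]
      have : (M : ℝ) * (-(h : ℝ) / M) = ((-h : ℤ) : ℝ) := by
        push_cast; field_simp
      rw [this, ee_int]
    rw [geom_sum_eq hz, hz2]; simp
  · intro h; exfalso; apply h; simp

lemma sum_sq_bound {ι : Type*} (S : Finset ι) (f : ι → ℕ) (hf : Set.InjOn f S) :
    ∑ i ∈ S, 1 / (f i : ℝ) ^ 2 ≤ 2 := by
  rw [← Finset.sum_image (f := fun n : ℕ => 1 / (n : ℝ) ^ 2) hf]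
  have h := sum_le_hasSum (S.image f) (fun i _ => by positivity) hasSum_zeta_two
  refine h.trans ?_
  nlinarith [Real.pi_pos, Real.pi_lt_d2]

lemma four_le (d p f : ℝ) (hp : 0 < p) (hf : 0 < f) (h1 : p ≤ d) (h2 : f ≤ d) :
    1 / d ^ 4 ≤ 1 / p ^ 2 * (1 / f ^ 2) := by
  have h3 : p ^ 2 * f ^ 2 ≤ d ^ 4 := by
    calc p ^ 2 * f ^ 2 ≤ d ^ 2 * d ^ 2 := by gcongr
      _ = d ^ 4 := by ring
  calc 1 / d ^ 4 ≤ 1 / (p ^ 2 * f ^ 2) := one_div_le_one_div_of_le (by positivity) h3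
    _ = _ := by field_simp

lemma tail_bound (M k l m : ℕ) (hk : k ≤ m) (hl : m < l) (hM : l ≤ M) :
    ∑ i ∈ Finset.range M \ Finset.Ico k l,
      (1 / |(m : ℝ) - i| ^ 4 + 1 / ((M : ℝ) - |(m : ℝ) - i|) ^ 4)
      ≤ 4 * (1 / ((m : ℝ) - k + 1) ^ 2 + 1 / ((l : ℝ) - m) ^ 2) := by
  have hk' : (k : ℝ) ≤ m := by exact_mod_cast hk
  have hl' : (m : ℝ) + 1 ≤ l := by exact_mod_cast hl
  have hM' : (l : ℝ) ≤ M := by exact_mod_cast hM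
  have hS : Finset.range M \ Finset.Ico k l = Finset.range k ∪ Finset.Ico l M := by
    ext i; simp; omega
  have hd : Disjoint (Finset.range k) (Finset.Ico l M) := by
    rw [Finset.disjoint_left]; intro i hi; simp at *; omega
  rw [hS, Finset.sum_union hd]
  set P := 1 / ((m : ℝ) - k + 1) ^ 2 with hP
  set Q := 1 / ((l : ℝ) - m) ^ 2 with hQ
  have hP0 : 0 ≤ P := by positivity
  have hQ0 : 0 ≤ Q := by positivity
  have A1 : ∑ i ∈ Finset.range k, (1 / |(m : ℝ) - i| ^ 4 + 1 / ((M : ℝ) - |(m : ℝ) - i|) ^ 4)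
      ≤ P * 2 + Q * 2 := by
    calc _ ≤ ∑ i ∈ Finset.range k, (P * (1 / ((k - i : ℕ) : ℝ) ^ 2)
              + Q * (1 / ((i + 1 : ℕ) : ℝ) ^ 2)) := by
            refine Finset.sum_le_sum fun i hi => ?_
            have hi := Finset.mem_range.mp hi
            have hi' : (i : ℝ) + 1 ≤ k := by exact_mod_cast hi
            have hi0 : (0 : ℝ) ≤ i := by positivity
            rw [abs_of_nonneg (by linarith), Nat.cast_sub hi.le]
            refine add_le_add (four_le _ _ _ ?_ ?_ ?_ ?_) (four_le _ _ _ ?_ ?_ ?_ ?_) <;>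
              (try push_cast) <;> linarith
      _ ≤ _ := by
            rw [Finset.sum_add_distrib, ← Finset.mul_sum, ← Finset.mul_sum]
            gcongr
            · exact sum_sq_bound _ (fun i => k - i) (by intro i hi j hj h; simp at *; omega)
            · exact sum_sq_bound _ (fun i => i + 1) (by intro i hi j hj h; simp at *; omega)
  have A2 : ∑ i ∈ Finset.Ico l M, (1 / |(m : ℝ) - i| ^ 4 + 1 / ((M : ℝ) - |(m : ℝ) - i|) ^ 4)
      ≤ Q * 2 + P * 2 := by
    calc _ ≤ ∑ i ∈ Finset.Ico l M, (Q * (1 / ((i + 1 - l : ℕ) : ℝ) ^ 2)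
              + P * (1 / ((M - i : ℕ) : ℝ) ^ 2)) := by
            refine Finset.sum_le_sum fun i hi => ?_
            obtain ⟨hi, hi2⟩ := Finset.mem_Ico.mp hi
            have hi' : (l : ℝ) ≤ i := by exact_mod_cast hi
            have hi2' : (i : ℝ) + 1 ≤ M := by exact_mod_cast hi2
            have hk0 : (0 : ℝ) ≤ k := by positivity
            rw [abs_of_nonpos (by linarith), Nat.cast_sub hi2.le,
              Nat.cast_sub (by omega : l ≤ i + 1)]
            refine add_le_add (four_le _ _ _ ?_ ?_ ?_ ?_) (four_le _ _ _ ?_ ?_ ?_ ?_) <;>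
              (try push_cast) <;> linarith
      _ ≤ _ := by
            rw [Finset.sum_add_distrib, ← Finset.mul_sum, ← Finset.mul_sum]
            gcongr
            · exact sum_sq_bound _ (fun i => i + 1 - l) (by intro i hi j hj h; simp at *; omega)
            · exact sum_sq_bound _ (fun i => M - i) (by intro i hi j hj h; simp at *; omega)
  linarith

lemma phi_upper (L M m i : ℕ) (x : ℝ) (hm : m < M) (hi : i < M) (hne : m ≠ i)
    (h1 : (m : ℝ) ≤ x * M) (h2 : x * M ≤ m + 1) :
    ‖DD L (x - (i + 1 / 2) / M)‖ ^ 4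
      ≤ (M : ℝ) ^ 4 * (1 / |(m : ℝ) - i| ^ 4 + 1 / ((M : ℝ) - |(m : ℝ) - i|) ^ 4) := by
  have hM : (0 : ℝ) < M := by exact_mod_cast (by omega : 0 < M)
  have hd : (1 : ℝ) ≤ |(m : ℝ) - i| := by
    have : (1 : ℤ) ≤ |(m : ℤ) - i| := Int.one_le_abs (by omega)
    exact_mod_cast this
  have hd2 : |(m : ℝ) - i| ≤ M - 1 := by
    have : |(m : ℤ) - i| ≤ M - 1 := by rw [abs_le]; omega
    exact_mod_cast this
  set d := |(m : ℝ) - i| with hdd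
  set y := x - (i + 1 / 2) / M with hy
  have hyM : y * M = (m - i) + (x * M - m - 1 / 2) := by
    rw [hy]; field_simp; ring
  have hay : |y| * M = |((m : ℝ) - i) + (x * M - m - 1 / 2)| := by
    rw [← hyM, abs_mul, abs_of_pos hM]
  have hth : |x * M - m - 1 / 2| ≤ 1 / 2 := by rw [abs_le]; constructor <;> linarith
  have hup : |y| * M ≤ d + 1 / 2 := by
    rw [hay]; exact (abs_add_le _ _).trans (by linarith)
  have hlo : d - 1 / 2 ≤ |y| * M := by
    rw [hay]
    have := abs_sub_abs_le_abs_sub ((m : ℝ) - i) (-(x * M - m - 1 / 2))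
    rw [abs_neg, sub_neg_eq_add] at this
    linarith
  have hy0 : d / (2 * M) ≤ |y| := by
    rw [div_le_iff₀ (by positivity)]; linarith
  have hy1 : (M - d) / (2 * M) ≤ 1 - |y| := by
    rw [div_le_iff₀ (by positivity)]; linarith
  have p1 : 0 < d / (2 * M) := by positivity
  have p2 : 0 < (M - d) / (2 * M) := div_pos (by linarith) (by positivity)
  have hMd : 0 < M - d := by linarith
  refine (DD_bound L y (by rw [← abs_pos]; linarith) (by linarith)).trans ?_
  rw [mul_add]
  refine add_le_add ?_ ?_
  · calc 1 / (16 * |y| ^ 4) ≤ 1 / (16 * (d / (2 * M)) ^ 4) := by gcongr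
      _ = _ := by field_simp; norm_num
  · calc 1 / (16 * (1 - |y|) ^ 4) ≤ 1 / (16 * ((M - d) / (2 * M)) ^ 4) := by gcongr
      _ = _ := by field_simp; norm_num

set_option maxHeartbeats 2000000 in
lemma onedim (H : ℕ) (hH : 2 ≤ H) (a b : ℝ) (ha : 0 ≤ a) (hab : a ≤ b) (hb : b ≤ 1) :
    ∃ (c : ℤ → ℂ) (T : ℝ → ℝ),
      (∀ x, (T x : ℂ) = ∑ h ∈ Finset.Icc (-(H : ℤ)) H, c h * ee (h * x)) ∧
      (∀ x, 0 ≤ T x) ∧ (∀ x, a ≤ x → x < b → 1 ≤ T x) ∧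
      ‖c 0‖ ≤ (b - a) + 2 ^ 27 / H ∧
      ∀ h ∈ Finset.Icc (-(H : ℤ)) H, ‖c h‖ ≤ 2 ^ 27 * (|(h : ℝ)| + 1)⁻¹ := by
  obtain ⟨L, hL⟩ : ∃ L, L = H / 2 := ⟨_, rfl⟩
  obtain ⟨M, hM⟩ : ∃ M, M = 8 * L := ⟨_, rfl⟩
  have hL1 : 1 ≤ L := by omega
  have hLH : 2 * (L - 1) ≤ H := by omega
  have hMH : 2 * H ≤ M := by omega
  have hM0 : 0 < M := by omega
  have hMR : (0 : ℝ) < M := by exact_mod_cast hM0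
  have hLR : (0 : ℝ) < L := by exact_mod_cast hL1
  have hHR : (2 : ℝ) ≤ H := by exact_mod_cast hH
  have hML : (M : ℝ) = 8 * L := by rw [hM]; push_cast; ring
  have hMHR : 2 * (H : ℝ) ≤ M := by exact_mod_cast hMH
  set E : ℝ := (M : ℝ) * rr L 0 with hE
  have hsum := DD_sum L H M hLH hMH hM0
  have hEL : (L : ℝ) ^ 4 ≤ E := by
    rw [hE, ← hsum ((0 + 1 / 2) / M)]
    refine le_trans ?_ (Finset.single_le_sum (fun i _ => by positivity) (Finset.mem_range.mpr hM0))
    simp [DD, ee_zero]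
  have hE0 : 0 < E := lt_of_lt_of_le (by positivity) hEL
  have hEU : E ≤ 8 * (L : ℝ) ^ 4 := by
    have : (rr L 0 : ℝ) ≤ (L : ℝ) ^ 3 := by exact_mod_cast rr_le L 0
    rw [hE, hML]
    calc 8 * (L : ℝ) * rr L 0 ≤ 8 * (L : ℝ) * L ^ 3 := by gcongr
      _ = _ := by ring
  obtain ⟨k, hk⟩ : ∃ k, k = ⌊a * M⌋₊ := ⟨_, rfl⟩
  obtain ⟨l, hl⟩ : ∃ l, l = ⌈b * M⌉₊ := ⟨_, rfl⟩
  have hlM : l ≤ M := by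
    rw [hl]; apply Nat.ceil_le.mpr; nlinarith
  have hkl : k ≤ l := by
    rw [hk, hl]
    exact (Nat.floor_le_floor (by gcongr)).trans (Nat.floor_le_ceil _)
  have hklR : (l : ℝ) - k ≤ (b - a) * M + 2 := by
    have h1 := Nat.ceil_lt_add_one (show 0 ≤ b * M by nlinarith)
    have h2 := Nat.lt_floor_add_one (a * M)
    rw [← hl] at h1; rw [← hk] at h2
    nlinarith
  set u : ℕ → ℝ := fun m => 2 ^ 21 * (1 / ((m : ℝ) - k + 1) ^ 2 + 1 / ((l : ℝ) - m) ^ 2) with hu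
  have hu0 : ∀ m, 0 ≤ u m := fun m => by rw [hu]; positivity
  have husum : ∑ m ∈ Finset.Ico k l, u m ≤ 2 ^ 23 := by
    rw [hu, ← Finset.mul_sum, Finset.sum_add_distrib]
    have s1 := sum_sq_bound (Finset.Ico k l) (fun m => m + 1 - k)
      (by intro i hi j hj h; simp at *; omega)
    have s2 := sum_sq_bound (Finset.Ico k l) (fun m => l - m)
      (by intro i hi j hj h; simp at *; omega)
    have e1 : ∑ m ∈ Finset.Ico k l, 1 / ((m : ℝ) - k + 1) ^ 2
        = ∑ m ∈ Finset.Ico k l, 1 / ((m + 1 - k : ℕ) : ℝ) ^ 2 := by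
      refine Finset.sum_congr rfl fun m hm => ?_
      rw [Finset.mem_Ico] at hm
      rw [Nat.cast_sub (by omega)]; push_cast; ring
    have e2 : ∑ m ∈ Finset.Ico k l, 1 / ((l : ℝ) - m) ^ 2
        = ∑ m ∈ Finset.Ico k l, 1 / ((l - m : ℕ) : ℝ) ^ 2 := by
      refine Finset.sum_congr rfl fun m hm => ?_
      rw [Finset.mem_Ico] at hm
      rw [Nat.cast_sub (by omega)]
    rw [e1, e2]
    linarith
  set g : ℤ → ℂ := fun h => ∑ m ∈ Finset.Ico k l,
    ((1 + u m : ℝ) : ℂ) * ee (-(h * ((m + 1 / 2) / M))) with hg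
  have hgu : ∀ h : ℤ, ‖g h‖ ≤ ‖∑ m ∈ Finset.Ico k l, ee (-(h * ((m + 1 / 2) / M)))‖ + 2 ^ 23 := by
    intro h
    have : g h = ∑ m ∈ Finset.Ico k l, ee (-(h * ((m + 1 / 2) / M)))
        + ∑ m ∈ Finset.Ico k l, ((u m : ℝ) : ℂ) * ee (-(h * ((m + 1 / 2) / M))) := by
      rw [hg, ← Finset.sum_add_distrib]
      refine Finset.sum_congr rfl fun m _ => ?_
      push_cast; ring
    rw [this]
    refine (norm_add_le _ _).trans ?_
    gcongr
    refine (norm_sum_le _ _).trans ?_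
    refine le_trans (le_of_eq ?_) husum
    refine Finset.sum_congr rfl fun m _ => ?_
    rw [norm_mul, norm_ee, mul_one, Complex.norm_real, Real.norm_of_nonneg (hu0 m)]
  have hc0 : ‖((rr L 0 / E : ℝ) : ℂ) * g 0‖ ≤ (b - a) + 2 ^ 27 / H := by
    have hr0 : (rr L 0 : ℝ) ≠ 0 := by
      intro h; rw [hE, h, mul_zero] at hE0; exact lt_irrefl _ hE0
    have e : (rr L 0 / E : ℝ) = 1 / M := by
      rw [hE]; field_simp
    have h0 : ‖g 0‖ ≤ (b - a) * M + 2 + 2 ^ 23 := by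
      refine (hgu 0).trans ?_
      gcongr
      refine le_trans (le_of_eq ?_) hklR
      simp [ee_zero, Nat.cast_sub hkl]
      rw [← Nat.cast_sub hkl, Complex.norm_natCast, Nat.cast_sub hkl]
    rw [norm_mul, Complex.norm_real, e, Real.norm_of_nonneg (by positivity)]
    calc 1 / (M : ℝ) * ‖g 0‖ ≤ 1 / M * ((b - a) * M + 2 + 2 ^ 23) := by gcongr
      _ = (b - a) + (2 + 2 ^ 23) / M := by field_simp; ring
      _ ≤ (b - a) + 2 ^ 27 / H := by
          gcongr
          · norm_num
          · linarith
  refine ⟨fun h => ((rr L h / E : ℝ) : ℂ) * g h,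
    fun x => ∑ m ∈ Finset.Ico k l, (1 + u m) * (‖DD L (x - (m + 1 / 2) / M)‖ ^ 4 / E),
    ?_, ?_, ?_, hc0, ?_⟩
  · intro x
    rw [Complex.ofReal_sum]
    have : ∀ m ∈ Finset.Ico k l,
        (((1 + u m) * (‖DD L (x - (m + 1 / 2) / M)‖ ^ 4 / E) : ℝ) : ℂ)
        = ∑ h ∈ Finset.Icc (-(H : ℤ)) H, ((rr L h / E : ℝ) : ℂ) *
          (((1 + u m : ℝ) : ℂ) * ee (-(h * ((m + 1 / 2) / M)))) * ee (h * x) := by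
      intro m _
      rw [Complex.ofReal_mul, Complex.ofReal_div, DD_expand L H hLH, Finset.sum_div,
        Finset.mul_sum]
      refine Finset.sum_congr rfl fun h _ => ?_
      rw [show (h : ℝ) * (x - (m + 1 / 2) / M) = -(h * ((m + 1 / 2) / M)) + h * x by ring, ee_add]
      push_cast
      ring
    rw [Finset.sum_congr rfl this, Finset.sum_comm]
    refine Finset.sum_congr rfl fun h _ => ?_
    simp only [hg]
    rw [Finset.mul_sum, Finset.sum_mul]
  · intro x
    refine Finset.sum_nonneg fun m _ => ?_
    have := hu0 m
    positivity
  · intro x hx1 hx2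
    have hx0 : 0 ≤ x := ha.trans hx1
    obtain ⟨m, hm⟩ : ∃ m, m = ⌊x * M⌋₊ := ⟨_, rfl⟩
    have hm1 : (m : ℝ) ≤ x * M := by rw [hm]; exact Nat.floor_le (by positivity)
    have hm2 : x * M ≤ m + 1 := by rw [hm]; exact (Nat.lt_floor_add_one _).le
    have hkm : k ≤ m := by rw [hk, hm]; exact Nat.floor_le_floor (by gcongr)
    have hml : m < l := by
      rw [hl, Nat.lt_ceil]
      exact lt_of_le_of_lt hm1 (by gcongr)
    have hmI : m ∈ Finset.Ico k l := Finset.mem_Ico.mpr ⟨hkm, hml⟩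
    set F : ℕ → ℝ := fun i => ‖DD L (x - (i + 1 / 2) / M)‖ ^ 4 / E with hF
    have hF0 : ∀ i, 0 ≤ F i := fun i => by rw [hF]; positivity
    have hFsum : ∑ i ∈ Finset.range M, F i = 1 := by
      rw [hF, ← Finset.sum_div, hsum x, ← hE, div_self hE0.ne']
    have hsub : Finset.Ico k l ⊆ Finset.range M := by
      intro i hi; simp at *; omega
    have hsplit := Finset.sum_sdiff (f := F) hsub
    have htail : ∑ i ∈ Finset.range M \ Finset.Ico k l, F i
        ≤ 2 ^ 12 * (4 * (1 / ((m : ℝ) - k + 1) ^ 2 + 1 / ((l : ℝ) - m) ^ 2)) := by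
      calc _ ≤ ∑ i ∈ Finset.range M \ Finset.Ico k l, 2 ^ 12 *
            (1 / |(m : ℝ) - i| ^ 4 + 1 / ((M : ℝ) - |(m : ℝ) - i|) ^ 4) := by
            refine Finset.sum_le_sum fun i hi => ?_
            rw [Finset.mem_sdiff, Finset.mem_range] at hi
            have hne : m ≠ i := by rintro rfl; exact hi.2 hmI
            rw [hF, div_le_iff₀ hE0]
            refine (phi_upper L M m i x (by omega) hi.1 hne hm1 hm2).trans ?_
            have hd2 : |(m : ℝ) - i| ≤ M := by
              have : |(m : ℤ) - i| ≤ M := by rw [abs_le]; omega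
              exact_mod_cast this
            have : (M : ℝ) ^ 4 ≤ 2 ^ 12 * E := by
              rw [hML]; nlinarith
            calc _ ≤ (2 ^ 12 * E) * (1 / |(m : ℝ) - i| ^ 4
                      + 1 / ((M : ℝ) - |(m : ℝ) - i|) ^ 4) := by gcongr
              _ = _ := by ring
        _ ≤ _ := by
            rw [← Finset.mul_sum]
            gcongr
            exact tail_bound M k l m hkm hml hlM
    have hlow : 1 / 128 ≤ F m := by
      rw [hF, le_div_iff₀ hE0]
      have : (L : ℝ) / 2 ≤ ‖DD L (x - (m + 1 / 2) / M)‖ := by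
        apply DD_lower
        have e : x - (m + 1 / 2) / M = (x * M - m - 1 / 2) / M := by field_simp; ring
        have hth : |x * M - m - 1 / 2| ≤ 1 / 2 := by rw [abs_le]; constructor <;> linarith
        rw [e, abs_div, abs_of_pos hMR, div_mul_eq_mul_div, div_le_iff₀ hMR, hML]
        rw [hML] at hth
        nlinarith
      have h4 : ((L : ℝ) / 2) ^ 4 ≤ ‖DD L (x - (m + 1 / 2) / M)‖ ^ 4 := by gcongr
      have : ((L : ℝ) / 2) ^ 4 = L ^ 4 / 16 := by ring
      linarith
    have hT : ∑ i ∈ Finset.Ico k l, (1 + u i) * F i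
        = ∑ i ∈ Finset.Ico k l, F i + ∑ i ∈ Finset.Ico k l, u i * F i := by
      rw [← Finset.sum_add_distrib]
      exact Finset.sum_congr rfl fun i _ => by ring
    have hS : u m * F m ≤ ∑ i ∈ Finset.Ico k l, u i * F i :=
      Finset.single_le_sum (f := fun i => u i * F i)
        (fun i _ => mul_nonneg (hu0 i) (hF0 i)) hmI
    have h5 : u m * (1 / 128) ≤ u m * F m := mul_le_mul_of_nonneg_left hlow (hu0 m)
    have h6 : u m = 2 ^ 21 * (1 / ((m : ℝ) - k + 1) ^ 2 + 1 / ((l : ℝ) - m) ^ 2) := rfl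
    show 1 ≤ ∑ i ∈ Finset.Ico k l, (1 + u i) * F i
    rw [hT]
    linarith
  · intro h hh
    by_cases h0 : h = 0
    · subst h0
      refine hc0.trans ?_
      have : (2 : ℝ) ^ 27 / H ≤ 2 ^ 27 / 2 := by gcongr
      norm_num at this ⊢
      linarith
    · have hh' : |h| ≤ H := abs_le.mpr (Finset.mem_Icc.mp hh)
      have hhR : |(h : ℝ)| ≤ H := by exact_mod_cast hh'
      have hh1 : (1 : ℝ) ≤ |(h : ℝ)| := by exact_mod_cast Int.one_le_abs h0
      have hgeo : ‖∑ m ∈ Finset.Ico k l, ee (-(h * ((m + 1 / 2) / M)))‖ ≤ M / (2 * |(h : ℝ)|) := by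
        rw [Finset.sum_Ico_eq_sum_range]
        have e : ∀ i ∈ Finset.range (l - k), ee (-(h * ((((k + i : ℕ) : ℝ) + 1 / 2) / M)))
            = ee (-(h * ((k + 1 / 2) / M))) * ee (i * (-h / M)) := by
          intro i _
          rw [← ee_add]; congr 1; push_cast; ring
        rw [Finset.sum_congr rfl e, ← Finset.mul_sum, norm_mul, norm_ee, one_mul]
        have ea : |-(h : ℝ) / M| = |(h : ℝ)| / M := by rw [abs_div, abs_neg, abs_of_pos hMR]
        refine (geom_ee (-h / M) ?_ ?_ _).trans (le_of_eq ?_)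
        · rw [ea, div_le_iff₀ hMR]; linarith
        · rw [← abs_pos, ea]; positivity
        · rw [ea]; field_simp
      have hr : (rr L h / E : ℝ) ≤ 8 / M := by
        have : (rr L h : ℝ) ≤ (L : ℝ) ^ 3 := by exact_mod_cast rr_le L h
        calc (rr L h / E : ℝ) ≤ L ^ 3 / L ^ 4 := by gcongr
          _ = 8 / M := by rw [hML]; field_simp
      show ‖((rr L h / E : ℝ) : ℂ) * g h‖ ≤ _
      rw [norm_mul, Complex.norm_real, Real.norm_of_nonneg (by positivity)]
      calc (rr L h / E : ℝ) * ‖g h‖ ≤ 8 / M * (M / (2 * |(h : ℝ)|) + 2 ^ 23) := by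
            gcongr
            exact (hgu h).trans (by gcongr)
        _ = 4 / |(h : ℝ)| + 2 ^ 26 / M := by
            have hne : |(h : ℝ)| ≠ 0 := by linarith
            generalize |(h : ℝ)| = t at hne
            rw [mul_add]
            congr 1
            · field_simp; norm_num
            · ring
        _ ≤ 8 / (|(h : ℝ)| + 1) + 2 ^ 26 / (|(h : ℝ)| + 1) := by
            refine add_le_add ?_ ?_
            · rw [div_le_div_iff₀ (by linarith) (by linarith)]; linarith
            · gcongr; linarith
        _ ≤ _ := by
            rw [← add_div, div_eq_mul_inv]
            gcongr
            norm_num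

lemma prod_add_le {ι : Type*} (S : Finset ι) (v : ι → ℝ) (C e : ℝ) (hC : 0 ≤ C) (he : 0 ≤ e)
    (he1 : e ≤ 1) (hv : ∀ i, 0 ≤ v i) (hv1 : ∀ i, v i ≤ 1) :
    ∏ i ∈ S, (v i + C * e) ≤ ∏ i ∈ S, v i + (2 + 2 * C) ^ S.card * e := by
  classical
  induction S using Finset.induction_on with
  | empty => simpa using he
  | insert i S hi ih =>
    rw [Finset.prod_insert hi, Finset.prod_insert hi, Finset.card_insert_of_notMem hi]
    have hp0 : 0 ≤ ∏ i ∈ S, v i := Finset.prod_nonneg fun i _ => hv i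
    have hp1 : ∏ i ∈ S, v i ≤ 1 := Finset.prod_le_one (fun i _ => hv i) (fun i _ => hv1 i)
    have hq : 1 ≤ (2 + 2 * C) ^ S.card := one_le_pow₀ (by linarith)
    set p := ∏ i ∈ S, v i
    set q := (2 + 2 * C) ^ S.card
    have hvi := hv i
    have hvi1 := hv1 i
    have hCe : C * e ≤ C := by nlinarith
    have hCe0 : 0 ≤ C * e := by positivity
    calc _ ≤ (v i + C * e) * (p + q * e) := by gcongr
      _ = v i * p + (v i * (q * e) + (C * e) * p + (C * e) * (q * e)) := by ring
      _ ≤ v i * p + (1 * (q * e) + (C * e) * 1 + C * (q * e)) := by gcongr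
      _ ≤ v i * p + (2 + 2 * C) ^ (S.card + 1) * e := by
          rw [pow_succ]
          change _ ≤ v i * p + q * (2 + 2 * C) * e
          have : C * e * 1 ≤ C * e * q := by gcongr
          nlinarith [mul_nonneg (zero_le_one.trans hq) he]

noncomputable def boxCount (s N : ℕ) (P : ℕ → Fin s → ℝ) (a b : Fin s → ℝ) : ℝ :=
  (((Finset.range N).filter fun n => ∀ j, a j ≤ P n j ∧ P n j < b j).card : ℝ)

lemma boxCount_eq (s N : ℕ) (P : ℕ → Fin s → ℝ) (a b : Fin s → ℝ) :
    boxCount s N P a b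
      = ∑ n ∈ Finset.range N, ∏ j, (if a j ≤ P n j ∧ P n j < b j then (1 : ℝ) else 0) := by
  unfold boxCount
  rw [Finset.card_filter]
  push_cast
  refine Finset.sum_congr rfl fun n _ => ?_
  rw [Fintype.prod_boole]
  congr

noncomputable def etkErr (s H N : ℕ) (Γ : ℕ → Fin s → ℝ) : ℝ :=
  ∑ h ∈ (Fintype.piFinset fun _ : Fin s =>
        Finset.Icc (-(H : ℤ)) (H : ℤ)).filter (fun h => h ≠ 0),
    (∏ j, (|(h j : ℝ)| + 1)⁻¹) *
      ‖∑ n ∈ Finset.range N,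
          Complex.exp (2 * Real.pi * Complex.I *
            ((∑ j, (h j : ℝ) * Γ n j : ℝ) : ℂ))‖

lemma etkErr_nonneg (s H N : ℕ) (Γ : ℕ → Fin s → ℝ) : 0 ≤ etkErr s H N Γ := by
  unfold etkErr
  refine Finset.sum_nonneg fun h _ => mul_nonneg (Finset.prod_nonneg fun j _ => ?_) (norm_nonneg _)
  positivity

lemma upper (s H N : ℕ) (hH : 2 ≤ H) (hN : 0 < N) (Γ : ℕ → Fin s → ℝ) (a b : Fin s → ℝ)
    (hab : ∀ j, 0 ≤ a j ∧ a j ≤ b j ∧ b j ≤ 1) :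
    boxCount s N Γ a b / N ≤ ∏ j, (b j - a j) +
      (2 + 2 * 2 ^ 27) ^ s * (1 / (H : ℝ) + (1 / (N : ℝ)) * etkErr s H N Γ) := by
  have hNR : (0 : ℝ) < N := by exact_mod_cast hN
  have hHR : (2 : ℝ) ≤ H := by exact_mod_cast hH
  choose c T hT hT0 hT1 hc0 hc using fun j => onedim H hH (a j) (b j) (hab j).1 (hab j).2.1 (hab j).2.2
  have h1 : boxCount s N Γ a b ≤ ∑ n ∈ Finset.range N, ∏ j, T j (Γ n j) := by
    rw [boxCount_eq]
    refine Finset.sum_le_sum fun n _ => Finset.prod_le_prod (fun j _ => ?_) (fun j _ => ?_)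
    · split_ifs <;> norm_num
    · split_ifs with h
      · exact hT1 j _ h.1 h.2
      · exact hT0 j _
  set S : (Fin s → ℤ) → ℂ := fun h => ∑ n ∈ Finset.range N,
          Complex.exp (2 * Real.pi * Complex.I *
            ((∑ j, (h j : ℝ) * Γ n j : ℝ) : ℂ)) with hS
  set B := Fintype.piFinset fun _ : Fin s => Finset.Icc (-(H : ℤ)) (H : ℤ) with hB
  have h2 : ((∑ n ∈ Finset.range N, ∏ j, T j (Γ n j) : ℝ) : ℂ)
      = ∑ h ∈ B, (∏ j, c j (h j)) * S h := by
    push_cast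
    simp_rw [hT, Finset.prod_univ_sum]
    rw [Finset.sum_comm]
    refine Finset.sum_congr rfl fun h _ => ?_
    rw [hS, Finset.mul_sum]
    refine Finset.sum_congr rfl fun n _ => ?_
    rw [Finset.prod_mul_distrib, ← ee_sum]
    rfl
  have hBi : (B.filter (fun h => ¬ h ≠ 0)) = {0} := by
    ext h
    simp only [Finset.mem_filter, not_not, Finset.mem_singleton]
    constructor
    · exact fun h => h.2
    · rintro rfl
      refine ⟨?_, rfl⟩
      rw [hB, Fintype.mem_piFinset]; intro j; simp
  have hz : ‖(∏ j, c j 0) * S 0‖ ≤ (∏ j, (b j - a j) + (2 + 2 * 2 ^ 27) ^ s * (1 / (H : ℝ))) * N := by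
    have e : S 0 = N := by simp [hS]
    rw [e, norm_mul, norm_prod, Complex.norm_natCast]
    gcongr
    have := prod_add_le Finset.univ (fun j => b j - a j) (2 ^ 27) (1 / (H : ℝ)) (by norm_num)
      (by positivity) (by rw [div_le_one (by linarith)]; linarith)
      (fun j => by linarith [hab j]) (fun j => by linarith [hab j])
    rw [Finset.card_univ, Fintype.card_fin] at this
    refine le_trans ?_ this
    refine Finset.prod_le_prod (fun j _ => norm_nonneg _) fun j _ => ?_
    rw [mul_one_div]; exact hc0 j
  have hr : ∑ h ∈ B.filter (fun h => h ≠ 0), ‖(∏ j, c j (h j)) * S h‖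
      ≤ (2 + 2 * 2 ^ 27) ^ s * etkErr s H N Γ := by
    unfold etkErr
    rw [Finset.mul_sum]
    refine Finset.sum_le_sum fun h hh => ?_
    have hhB := Fintype.mem_piFinset.mp (Finset.mem_filter.mp hh).1
    rw [norm_mul, norm_prod, ← mul_assoc]
    refine mul_le_mul_of_nonneg_right ?_ (norm_nonneg _)
    calc ∏ j, ‖c j (h j)‖ ≤ ∏ j, ((2 + 2 * 2 ^ 27) * (|(h j : ℝ)| + 1)⁻¹) := by
          refine Finset.prod_le_prod (fun j _ => norm_nonneg _) fun j _ => ?_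
          refine (hc j (h j) (hhB j)).trans ?_
          gcongr
          norm_num
      _ = _ := by rw [Finset.prod_mul_distrib]; simp
  have h3 : boxCount s N Γ a b ≤ (∏ j, (b j - a j) + (2 + 2 * 2 ^ 27) ^ s * (1 / (H : ℝ))) * N
      + (2 + 2 * 2 ^ 27) ^ s * etkErr s H N Γ := by
    calc boxCount s N Γ a b ≤ ∑ n ∈ Finset.range N, ∏ j, T j (Γ n j) := h1
      _ ≤ ‖((∑ n ∈ Finset.range N, ∏ j, T j (Γ n j) : ℝ) : ℂ)‖ := by
          rw [Complex.norm_real]; exact le_abs_self _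
      _ ≤ ∑ h ∈ B, ‖(∏ j, c j (h j)) * S h‖ := by rw [h2]; exact norm_sum_le _ _
      _ = ∑ h ∈ B.filter (fun h => h ≠ 0), ‖(∏ j, c j (h j)) * S h‖
          + ‖(∏ j, c j 0) * S 0‖ := by
          rw [← Finset.sum_filter_add_sum_filter_not B (fun h => h ≠ 0), hBi,
            Finset.sum_singleton]
          rfl
      _ ≤ _ := (add_le_add hr hz).trans_eq (add_comm _ _)
  rw [div_le_iff₀ hNR]
  refine h3.trans (le_of_eq ?_)
  generalize (2 + 2 * 2 ^ 27 : ℝ) ^ s = K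
  field_simp
  ring

lemma three_ind (a b x : ℝ) (g0 : 0 ≤ x) (g1 : x < 1) (hab : a ≤ b) :
    (if 0 ≤ x ∧ x < a then (1 : ℝ) else 0) + (if a ≤ x ∧ x < b then (1 : ℝ) else 0)
      + (if b ≤ x ∧ x < 1 then (1 : ℝ) else 0) = 1 := by
  rcases lt_or_ge x a with h | h
  · rw [if_pos ⟨g0, h⟩, if_neg (by intro h'; linarith [h'.1]),
      if_neg (by intro h'; linarith [h'.1])]
    norm_num
  · rcases lt_or_ge x b with h' | h'
    · rw [if_neg (by intro h'; linarith [h'.2]), if_pos ⟨h, h'⟩,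
        if_neg (by intro h'; linarith [h'.1])]
      norm_num
    · rw [if_neg (by intro h'; linarith [h'.2]), if_neg (by intro h'; linarith [h'.2]),
        if_pos ⟨h', g1⟩]
      norm_num

lemma both (s H N : ℕ) (hH : 2 ≤ H) (hN : 0 < N) (Γ : ℕ → Fin s → ℝ)
    (hΓ : ∀ n < N, ∀ j, 0 ≤ Γ n j ∧ Γ n j < 1) (a b : Fin s → ℝ)
    (hab : ∀ j, 0 ≤ a j ∧ a j ≤ b j ∧ b j ≤ 1) :
    |boxCount s N Γ a b / N - ∏ j, (b j - a j)| ≤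
      3 ^ s * (2 + 2 * 2 ^ 27) ^ s * (1 / (H : ℝ) + (1 / (N : ℝ)) * etkErr s H N Γ) := by
  have hNR : (0 : ℝ) < N := by exact_mod_cast hN
  have hR : 0 ≤ (2 + 2 * 2 ^ 27) ^ s * (1 / (H : ℝ) + (1 / (N : ℝ)) * etkErr s H N Γ) := by
    have := etkErr_nonneg s H N Γ
    positivity
  have hup := upper s H N hH hN Γ
  set R := (2 + 2 * 2 ^ 27) ^ s * (1 / (H : ℝ) + (1 / (N : ℝ)) * etkErr s H N Γ) with hRdef
  rw [mul_assoc, ← hRdef]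
  have h3 : (1 : ℝ) ≤ 3 ^ s := one_le_pow₀ (by norm_num)
  let lo : Fin s → Fin 3 → ℝ := fun j => ![0, a j, b j]
  let hi : Fin s → Fin 3 → ℝ := fun j => ![a j, b j, 1]
  have hlh : ∀ (k : Fin s → Fin 3) (j : Fin s),
      0 ≤ lo j (k j) ∧ lo j (k j) ≤ hi j (k j) ∧ hi j (k j) ≤ 1 := by
    intro k j
    obtain ⟨h1, h2, h3⟩ := hab j
    generalize k j = t
    fin_cases t <;> simp [lo, hi] <;> (try constructor) <;> (try constructor) <;> linarith
  have hvol : ∑ k : Fin s → Fin 3, ∏ j, (hi j (k j) - lo j (k j)) = 1 := by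
    have := Finset.prod_univ_sum (fun _ : Fin s => (Finset.univ : Finset (Fin 3)))
      (fun j t => hi j t - lo j t)
    rw [Fintype.piFinset_univ] at this
    rw [← this]
    refine Finset.prod_eq_one fun j _ => ?_
    simp [Fin.sum_univ_three, lo, hi]
  have hcnt : ∑ k : Fin s → Fin 3,
      boxCount s N Γ (fun j => lo j (k j)) (fun j => hi j (k j)) / N = 1 := by
    rw [← Finset.sum_div, div_eq_one_iff_eq hNR.ne']
    simp_rw [boxCount_eq]
    rw [Finset.sum_comm]
    have : ∀ n ∈ Finset.range N, ∑ k : Fin s → Fin 3,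
        ∏ j, (if lo j (k j) ≤ Γ n j ∧ Γ n j < hi j (k j) then (1 : ℝ) else 0) = 1 := by
      intro n hn
      have := Finset.prod_univ_sum (fun _ : Fin s => (Finset.univ : Finset (Fin 3)))
        (fun j t => if lo j t ≤ Γ n j ∧ Γ n j < hi j t then (1 : ℝ) else 0)
      rw [Fintype.piFinset_univ] at this
      rw [← this]
      refine Finset.prod_eq_one fun j _ => ?_
      obtain ⟨g0, g1⟩ := hΓ n (Finset.mem_range.mp hn) j
      obtain ⟨h1, h2, h3⟩ := hab j
      rw [Fin.sum_univ_three]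
      exact three_ind (a j) (b j) (Γ n j) g0 g1 h2
    rw [Finset.sum_congr rfl this]
    simp
  have key := Finset.single_le_sum (s := (Finset.univ : Finset (Fin s → Fin 3)))
    (f := fun k => ∏ j, (hi j (k j) - lo j (k j)) + R
      - boxCount s N Γ (fun j => lo j (k j)) (fun j => hi j (k j)) / N)
    (fun k _ => by
      have := hup (fun j => lo j (k j)) (fun j => hi j (k j)) (hlh k)
      show 0 ≤ ∏ j, (hi j (k j) - lo j (k j)) + R
        - boxCount s N Γ (fun j => lo j (k j)) (fun j => hi j (k j)) / N
      linarith) (Finset.mem_univ (fun _ => 1))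
  rw [Finset.sum_sub_distrib, Finset.sum_add_distrib, hvol, hcnt] at key
  have e : ∑ _k : Fin s → Fin 3, R = 3 ^ s * R := by simp
  rw [e] at key
  simp only [lo, hi, Matrix.cons_val_one, Matrix.cons_val_zero] at key
  have h4 := hup a b hab
  have h5 : R ≤ 3 ^ s * R := by nlinarith
  rw [abs_le]
  constructor
  · change ∏ j, (b j - a j) + R - boxCount s N Γ a b / N ≤ _ at key
    linarith
  · linarith

theorem stmt13 (s : ℕ) (hs : 1 ≤ s) :
    ∃ C : ℝ, 0 < C ∧
      ∀ (H N : ℕ), 1 < H → 0 < N →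
        ∀ Γ : ℕ → Fin s → ℝ,
          (∀ n < N, ∀ j, 0 ≤ Γ n j ∧ Γ n j < 1) →
          discrepancy s N Γ ≤
            C * (1 / (H : ℝ) +
              (1 / (N : ℝ)) *
                ∑ h ∈ (Fintype.piFinset fun _ : Fin s =>
                      Finset.Icc (-(H : ℤ)) (H : ℤ)).filter (fun h => h ≠ 0),
                  (∏ j, (|(h j : ℝ)| + 1)⁻¹) *
                    ‖∑ n ∈ Finset.range N,
                        Complex.exp (2 * Real.pi * Complex.I *
                          ((∑ j, (h j : ℝ) * Γ n j : ℝ) : ℂ))‖) := by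
  refine ⟨3 ^ s * (2 + 2 * 2 ^ 27) ^ s, by positivity, ?_⟩
  intro H N hH hN Γ hΓ
  change discrepancy s N Γ ≤ 3 ^ s * (2 + 2 * 2 ^ 27) ^ s *
    (1 / (H : ℝ) + (1 / (N : ℝ)) * etkErr s H N Γ)
  unfold discrepancy
  apply Real.sSup_le
  · rintro D ⟨a, b, hab, rfl⟩
    exact both s H N hH hN Γ hΓ a b hab
  · have := etkErr_nonneg s H N Γ
    positivity
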